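/- arXiv:0705.2686 — 4 statements merged into one kernel-verified Lean document; each statement's English description precedes it below -/
import Mathlib

section
/- Let M_j be an R_j-module for each j ∈ I, each regarded as an R-module via the projection R → R_j, and let N be any R-module. Then for each i ∈ I the R-module M_i ⊗_{R_i} (e_i N) is a retract of (∏_{j∈I} M_j) ⊗_R N: there exist R-module homomorphisms s : M_i ⊗_{R_i} (e_i N) → (∏_{j∈I} M_j) ⊗_R N and p : (∏_{j∈I} M_j) ⊗_R N → M_i ⊗_{R_i} (e_i N) with p ∘ s the identity. (Here e_i N is an R_i-module, R_i acting through the i-th component.) -/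
open scoped Classical TensorProduct

noncomputable section

variable {I : Type*} (R : I → Type*) [∀ i, CommRing (R i)]

/-- The idempotent `e_i ∈ R = ∏_j R_j` whose `i`-th component is `1` and the others `0`. -/
def piIdem (i : I) : ∀ j, R j :=
  fun j => if j = i then 1 else 0

lemma piIdem_eq_single (i : I) : piIdem R i = Pi.single i 1 := by
  funext j
  by_cases h : j = i
  · subst h; simp [piIdem]
  · simp [piIdem, h, Pi.single_eq_of_ne h]

lemma piIdem_mul_self (i : I) : piIdem R i * piIdem R i = piIdem R i := by
  funext j
  by_cases h : j = i <;> simp [piIdem, h]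

variable (M : I → Type*) [∀ i, AddCommGroup (M i)] [∀ i, Module (R i) (M i)]

/-- Each `R_i`-module `M i` is regarded as a module over `R = ∏_j R_j` via the
projection `R → R_i`. -/
instance projModule (i : I) : Module (∀ j, R j) (M i) :=
  Module.compHom (M i) (Pi.evalRingHom R i)

variable (N : Type*) [AddCommGroup N] [Module (∀ j, R j) N]

/-- The part `e_i N` of an `R = ∏_j R_j`-module `N`. -/
def eSub (i : I) : Submodule (∀ j, R j) N :=
  LinearMap.range (LinearMap.lsmul (∀ j, R j) N (piIdem R i))

lemma mem_eSub {i : I} {x : N} : x ∈ eSub R N i ↔ ∃ m : N, piIdem R i • m = x := by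
  simp [eSub, LinearMap.mem_range, LinearMap.lsmul_apply]

lemma single_smul_mem_eSub (i : I) (r : R i) {x : N} (hx : x ∈ eSub R N i) :
    (Pi.single i r : ∀ j, R j) • x ∈ eSub R N i := by
  obtain ⟨m, rfl⟩ := (mem_eSub R N).mp hx
  refine (mem_eSub R N).mpr ⟨(Pi.single i r : ∀ j, R j) • m, ?_⟩
  rw [smul_smul, smul_smul, mul_comm]

/-- `e_i N` is an `R_i`-module, `R_i` acting through the `i`-th component. -/
instance eSubSMul (i : I) : SMul (R i) (eSub R N i) where
  smul r x := ⟨(Pi.single i r : ∀ j, R j) • (x : N), single_smul_mem_eSub R N i r x.2⟩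

lemma eSub_smul_def (i : I) (r : R i) (x : eSub R N i) :
    ((r • x : eSub R N i) : N) = (Pi.single i r : ∀ j, R j) • (x : N) := rfl

instance eSubModule (i : I) : Module (R i) (eSub R N i) where
  one_smul x := by
    ext
    rw [eSub_smul_def]
    obtain ⟨m, hm⟩ := (mem_eSub R N).mp x.2
    rw [← hm, smul_smul, ← piIdem_eq_single, piIdem_mul_self]
  mul_smul r s x := by
    ext
    rw [eSub_smul_def, eSub_smul_def, eSub_smul_def, smul_smul, Pi.single_mul]
  smul_zero r := by
    ext
    rw [eSub_smul_def]
    simp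
  smul_add r x y := by
    ext
    rw [eSub_smul_def]
    simp [eSub_smul_def]
  add_smul r s x := by
    ext
    rw [eSub_smul_def, Pi.single_add]
    simp [eSub_smul_def, add_smul]
  zero_smul x := by
    ext
    rw [eSub_smul_def, Pi.single_zero]
    simp

/-- `M_i ⊗_{R_i} (e_i N)` is regarded as a module over `R = ∏_j R_j` via the
projection `R → R_i`. -/
instance tensModule (i : I) : Module (∀ j, R j) ((M i) ⊗[R i] (eSub R N i)) :=
  Module.compHom _ (Pi.evalRingHom R i)

/-! `M_i` is a retract of `∏_j M_j`, and `e_i N` is a retract of `N` because multiplication by `e_i`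
projects `N` onto it. Tensoring the two retractions over `R` exhibits `M_i ⊗_R (e_i N)` as a retract
of `(∏_j M_j) ⊗_R N`. Both `M_i` and `e_i N` carry their `R`-action through the surjection
`R → R_i`, so tensoring them over `R` or over `R_i` gives the same module. -/

section Retract

variable {A B M₁ M₂ P₁ P₂ : Type*} [CommSemiring A] [CommSemiring B] [Algebra A B]
  [AddCommMonoid M₁] [AddCommMonoid M₂] [AddCommMonoid P₁] [AddCommMonoid P₂]
  [Module A M₁] [Module A M₂] [Module A P₁] [Module A P₂]
  {s₁ : M₁ →ₗ[A] P₁} {p₁ : P₁ →ₗ[A] M₁} {s₂ : M₂ →ₗ[A] P₂} {p₂ : P₂ →ₗ[A] M₂}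

lemma tensorMap_comp_tensorMap_eq_id
    (h₁ : p₁ ∘ₗ s₁ = LinearMap.id) (h₂ : p₂ ∘ₗ s₂ = LinearMap.id) :
    TensorProduct.map p₁ p₂ ∘ₗ TensorProduct.map s₁ s₂ = LinearMap.id := by
  rw [← TensorProduct.map_comp, h₁, h₂, TensorProduct.map_id]

theorem exists_tensor_retract_of_algebraMap_surjective
    [Module B M₁] [Module B M₂] [IsScalarTower A B M₁] [IsScalarTower A B M₂]
    (hAB : Function.Surjective (algebraMap A B))
    (h₁ : p₁ ∘ₗ s₁ = LinearMap.id) (h₂ : p₂ ∘ₗ s₂ = LinearMap.id) :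
    ∃ (s : M₁ ⊗[B] M₂ →ₗ[A] P₁ ⊗[A] P₂) (p : P₁ ⊗[A] P₂ →ₗ[A] M₁ ⊗[B] M₂),
      p ∘ₗ s = LinearMap.id := by
  have : TensorProduct.CompatibleSMul A B M₁ M₂ := .of_algebraMap_surjective _ _ hAB
  let e : M₁ ⊗[B] M₂ ≃ₗ[A] M₁ ⊗[A] M₂ := TensorProduct.equivOfCompatibleSMul A B A M₁ M₂
  refine ⟨TensorProduct.map s₁ s₂ ∘ₗ e, e.symm ∘ₗ TensorProduct.map p₁ p₂, ?_⟩
  calc (e.symm.toLinearMap ∘ₗ TensorProduct.map p₁ p₂) ∘ₗ TensorProduct.map s₁ s₂ ∘ₗ e.toLinearMap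
      = e.symm.toLinearMap ∘ₗ (TensorProduct.map p₁ p₂ ∘ₗ TensorProduct.map s₁ s₂) ∘ₗ
          e.toLinearMap := by simp only [LinearMap.comp_assoc]
    _ = e.symm.toLinearMap ∘ₗ e.toLinearMap := by
        rw [tensorMap_comp_tensorMap_eq_id h₁ h₂, LinearMap.id_comp]
    _ = LinearMap.id := e.symm_comp

end Retract

lemma isProj_range_lsmul_of_isIdempotentElem {A P : Type*} [CommSemiring A] [AddCommMonoid P]
    [Module A P] {e : A} (he : IsIdempotentElem e) :
    LinearMap.IsProj (LinearMap.range (LinearMap.lsmul A P e)) (LinearMap.lsmul A P e) :=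
  LinearMap.IsIdempotentElem.isProj_range _ (he.map (Algebra.lsmul A A P))

/-- `R_i` as an algebra over `R = ∏_j R_j` via the projection `R → R_i`. It lets the two actions on
`M_i` and on `e_i N` be compared through `IsScalarTower`. -/
instance piEvalAlgebra (i : I) : Algebra (∀ j, R j) (R i) :=
  (Pi.evalRingHom R i).toAlgebra

instance projModule_isScalarTower (i : I) : IsScalarTower (∀ j, R j) (R i) (M i) where
  smul_assoc r a m := mul_smul (r i) a m

lemma isProj_eSub (i : I) :
    LinearMap.IsProj (eSub R N i) (LinearMap.lsmul (∀ j, R j) N (piIdem R i)) :=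
  isProj_range_lsmul_of_isIdempotentElem (piIdem_mul_self R i)

lemma piIdem_smul_coe_eSub (i : I) (x : eSub R N i) : piIdem R i • (x : N) = x :=
  (isProj_eSub R N i).map_id x x.2

lemma smul_eSub_eq_eval_smul (i : I) (r : ∀ j, R j) (x : eSub R N i) : r • x = r i • x := by
  ext
  calc r • (x : N) = (r * piIdem R i) • (x : N) := by rw [mul_smul, piIdem_smul_coe_eSub]
    _ = (Pi.single i (r i) : ∀ j, R j) • (x : N) := by
        rw [piIdem_eq_single, ← Pi.single_mul_right, mul_one]

instance eSub_isScalarTower (i : I) : IsScalarTower (∀ j, R j) (R i) (eSub R N i) where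
  smul_assoc r a x := by
    rw [smul_eSub_eq_eval_smul]
    exact mul_smul (r i) a x

/-- For each `i`, the `R`-module `M_i ⊗_{R_i} (e_i N)` is a retract of
`(∏_j M_j) ⊗_R N`. -/
theorem tensor_component_retract (i : I) :
    ∃ (s : (M i) ⊗[R i] (eSub R N i) →ₗ[∀ j, R j] (∀ j, M j) ⊗[∀ j, R j] N)
      (p : (∀ j, M j) ⊗[∀ j, R j] N →ₗ[∀ j, R j] (M i) ⊗[R i] (eSub R N i)),
      p.comp s = LinearMap.id := by
  have hM : LinearMap.proj i ∘ₗ LinearMap.single (∀ j, R j) M i = LinearMap.id :=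
    LinearMap.proj_comp_single_same _ _ i
  have hN : (isProj_eSub R N i).codRestrict ∘ₗ (eSub R N i).subtype = LinearMap.id :=
    LinearMap.ext (isProj_eSub R N i).codRestrict_apply_cod
  -- `tensModule` is definitionally the `R`-action on the left tensor factor used by the lemma.
  exact exists_tensor_retract_of_algebraMap_surjective (Function.surjective_eval i) hM hN

end
end

section
/- Let 𝒮 be a set of finite subgroups of G. Suppose that for every one-dimensional subtorus K of G there exist finitely many characters α₁,…,α_n ∈ ℤ^r, each nontrivial on K, such that every F ∈ 𝒮 has some α_i trivial on F. Then 𝒮 is finite. -/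
open scoped Classical

noncomputable section

/-- The `r`-torus `G = (ℝ/ℤ)^r`. -/
abbrev Torus (r : ℕ) : Type := Fin r → AddCircle (1 : ℝ)

/-- The character `χ_α : G → ℝ/ℤ` associated to `α ∈ ℤ^r` is trivial on the subgroup `H`. -/
def IsTrivialOn {r : ℕ} (α : Fin r → ℤ) (H : AddSubgroup (Torus r)) : Prop :=
  ∀ x ∈ H, (∑ i, α i • x i) = (0 : AddCircle (1 : ℝ))

/-- The subgroup of `ℤ^r` consisting of characters trivial on `H`. -/
def trivialChars {r : ℕ} (H : AddSubgroup (Torus r)) : AddSubgroup (Fin r → ℤ) where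
  carrier := {α | IsTrivialOn α H}
  zero_mem' := by
    intro x _
    simp
  add_mem' := by
    intro α β hα hβ x hx
    have := hα x hx
    have := hβ x hx
    simp only [Pi.add_apply, add_zsmul]
    rw [Finset.sum_add_distrib]
    simp_all
  neg_mem' := by
    intro α hα x hx
    have := hα x hx
    simp only [Pi.neg_apply, neg_zsmul]
    rw [Finset.sum_neg_distrib]
    simp_all

/-- A subtorus of `G`: a closed connected subgroup. -/
structure Subtorus (r : ℕ) where
  toAddSubgroup : AddSubgroup (Torus r)
  isClosed' : IsClosed (toAddSubgroup : Set (Torus r))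
  isConnected' : IsConnected (toAddSubgroup : Set (Torus r))

/-- The dimension of a subtorus: `r` minus the rank of the group of characters trivial on it. -/
def Subtorus.dim {r : ℕ} (K : Subtorus r) : ℕ :=
  r - Module.finrank ℤ (AddSubgroup.toIntSubmodule (trivialChars K.toAddSubgroup))

/-- The set `ℱ` of finite subgroups of the torus, as a type. -/
def FinSub (r : ℕ) : Type := {F : AddSubgroup (Torus r) // (F : Set (Torus r)).Finite}

/-- The ring `𝒪_ℱ = ∏_{F ∈ ℱ} H^*(BG/F; ℚ) = ∏_{F ∈ ℱ} ℚ[x₁,…,x_r]`. -/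
abbrev OcalF (r : ℕ) : Type := FinSub r → MvPolynomial (Fin r) ℚ

/-- The linear form `α₁x₁ + ⋯ + α_r x_r` associated to a character `α`. -/
def lform {r : ℕ} (α : Fin r → ℤ) : MvPolynomial (Fin r) ℚ :=
  ∑ i, MvPolynomial.C (α i : ℚ) * MvPolynomial.X i

/-- The Euler class `e(α) ∈ 𝒪_ℱ` of a character `α`. -/
def euler {r : ℕ} (α : Fin r → ℤ) : OcalF r :=
  fun F => if IsTrivialOn α F.1 then lform α else 1

/-- The idempotent `e_F ∈ 𝒪_ℱ` supported at the finite subgroup `F`. -/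
def idemF {r : ℕ} (F : FinSub r) : OcalF r :=
  fun F' => if F' = F then 1 else 0

/-- An element `x` of an `𝒪_ℱ`-module `M` vanishes at the subtorus `K` if it is killed by
a product of Euler classes of characters each nontrivial on `K`. -/
def VanishesAt {r : ℕ} {M : Type*} [AddCommGroup M] [Module (OcalF r) M]
    (x : M) (K : Subtorus r) : Prop :=
  ∃ (n : ℕ) (αs : Fin n → (Fin r → ℤ)),
    (∀ i, ¬ IsTrivialOn (αs i) K.toAddSubgroup) ∧ (∏ i, euler (αs i)) • x = 0

end

/-!
Every nonzero functional on `ℤ^r` comes from a one-dimensional subtorus: the characters trivial on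
the image of `x ↦ (v₁x, …, v_r x)` are those orthogonal to `v`. So the hypothesis says that the
groups `N F` of characters trivial on `F ∈ 𝒮` escape the kernel of every nonzero functional, through
a finite set of elements independent of `F`. By Noetherian induction on `L ≤ ℤ^r` there is `a ≠ 0`
such that `L ≤ N F` implies `a ℤ^r ≤ N F` for all `F ∈ 𝒮`: if `ℤ^r / L` is torsion, take `a`
killing it; otherwise `L` lies in the kernel of a nonzero functional, `N F` contains one of finitely
many strictly larger submodules, and the product of their constants works for `L`. For `L = 0` this
places every `F ∈ 𝒮` in the finite group of points of the torus killed by `a`.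
-/

section Module

variable {R M : Type*} [CommRing R] [IsDomain R] [AddCommGroup M] [Module R M] [Module.Finite R M]

theorem finrank_ker_add_one_of_ne_zero {f : M →ₗ[R] R} (hf : f ≠ 0) :
    Module.finrank R (LinearMap.ker f) + 1 = Module.finrank R M := by
  have : Nontrivial (LinearMap.range f) :=
    Submodule.nontrivial_iff_ne_bot.mpr (mt LinearMap.range_eq_bot.mp hf)
  have finrank_range : Module.finrank R (LinearMap.range f) = 1 :=
    le_antisymm (by simpa using Submodule.finrank_le (LinearMap.range f)) Module.finrank_pos
  rw [← (LinearMap.ker f).finrank_quotient_add_finrank, f.quotKerEquivRange.finrank_eq,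
    finrank_range, add_comm]

variable [IsPrincipalIdealRing R]

theorem isTorsion_of_subsingleton_dual [Subsingleton (Module.Dual R M)] :
    Module.IsTorsion R M := by
  have : Subsingleton (Module.Dual R (M ⧸ Submodule.torsion R M)) :=
    (LinearMap.dualMap_injective_of_surjective
      (Submodule.torsion R M).mkQ_surjective).subsingleton
  have : Subsingleton (M ⧸ Submodule.torsion R M) :=
    not_nontrivial_iff_subsingleton.mp fun h =>
      not_nontrivial _ ((Module.nontrivial_dual_iff R).mpr h)
  exact fun {x} => (Submodule.mem_torsion_iff x).mp
    ((Submodule.Quotient.mk_eq_zero _).mp (Subsingleton.elim _ _))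

theorem exists_smul_mem_or_exists_le_ker (L : Submodule R M) :
    (∃ a : R, a ≠ 0 ∧ ∀ x, a • x ∈ L) ∨ ∃ f : M →ₗ[R] R, f ≠ 0 ∧ L ≤ LinearMap.ker f := by
  rcases subsingleton_or_nontrivial (Module.Dual R (M ⧸ L)) with _ | _
  · have torsion_quotient : Module.IsTorsion R (M ⧸ L) := isTorsion_of_subsingleton_dual
    obtain ⟨a, ha, ha_reg⟩ := Submodule.annihilator_top_inter_nonZeroDivisors torsion_quotient
    refine Or.inl ⟨a, nonZeroDivisors.ne_zero ha_reg, fun x => ?_⟩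
    rw [← Submodule.Quotient.mk_eq_zero, Submodule.Quotient.mk_smul]
    exact Submodule.mem_annihilator.mp ha _ trivial
  · obtain ⟨g, hg⟩ := exists_ne (0 : Module.Dual R (M ⧸ L))
    refine Or.inr ⟨g ∘ₗ L.mkQ, fun h => hg ?_, ?_⟩
    · exact (LinearMap.cancel_right L.mkQ_surjective).mp h
    · exact L.ker_mkQ.symm.le.trans (LinearMap.ker_le_ker_comp _ _)

theorem exists_ne_zero_forall_smul_mem_of_forall_functional {ι : Type*} (N : ι → Submodule R M)
    (hN : ∀ f : M →ₗ[R] R, f ≠ 0 →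
      ∃ A : Finset M, (∀ x ∈ A, f x ≠ 0) ∧ ∀ i, ∃ x ∈ A, x ∈ N i) :
    ∃ a : R, a ≠ 0 ∧ ∀ i x, a • x ∈ N i := by
  suffices ∀ L : Submodule R M, ∃ a : R, a ≠ 0 ∧ ∀ i, L ≤ N i → ∀ x, a • x ∈ N i by
    obtain ⟨a, ha, haN⟩ := this ⊥
    exact ⟨a, ha, fun i => haN i bot_le⟩
  intro L
  induction L using WellFoundedGT.induction with
  | ind L ih =>
    rcases exists_smul_mem_or_exists_le_ker L with ⟨a, ha, haL⟩ | ⟨f, hf, hLf⟩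
    · exact ⟨a, ha, fun i hi x => hi (haL x)⟩
    obtain ⟨A, hfA, hAN⟩ := hN f hf
    have lt_sup : ∀ x ∈ A, L < L ⊔ Submodule.span R {x} := fun x hx =>
      left_lt_sup.mpr fun hle => hfA x hx (hLf (hle (Submodule.mem_span_singleton_self x)))
    choose! a ha haN using fun x hx => ih _ (lt_sup x hx)
    refine ⟨∏ x ∈ A, a x, Finset.prod_ne_zero_iff.mpr ha, fun i hi y => ?_⟩
    obtain ⟨x, hxA, hxN⟩ := hAN i
    have hax : a x • y ∈ N i :=
      haN x hxA i (sup_le hi ((Submodule.span_singleton_le_iff_mem _ _).mpr hxN)) y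
    rw [← Finset.prod_erase_mul A a hxA, mul_smul]
    exact (N i).smul_mem _ hax

end Module

section Circle

theorem eq_zero_of_forall_zsmul_addCircle_eq_zero {𝕜 : Type*} [Field 𝕜] [LinearOrder 𝕜]
    [IsStrictOrderedRing 𝕜] {p : 𝕜} [Fact (0 < p)] {n : ℤ}
    (hn : ∀ x : AddCircle p, n • x = 0) : n = 0 := by
  have hdvd := addOrderOf_dvd_iff_zsmul_eq_zero.mpr (hn ↑(p / ((n.natAbs + 1 : ℕ) : 𝕜)))
  rw [AddCircle.addOrderOf_period_div n.natAbs.succ_pos] at hdvd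
  exact Int.eq_zero_of_abs_lt_dvd hdvd (by simp)

theorem finite_setOf_zsmul_pi_addCircle_eq_zero (ι : Type*) [Finite ι] {A : Type*} [AddCommGroup A]
    [IsAddTorsionFree A] (p : A) {a : ℤ} (ha : a ≠ 0) :
    {x : ι → AddCircle p | a • x = 0}.Finite := by
  have finite_circle : {u : AddCircle p | a • u = 0}.Finite :=
    AddCircle.finite_torsion_of_isSMulRegular_int p a (zsmul_right_injective ha)
  exact (Set.Finite.pi' fun _ : ι => finite_circle).subset fun x hx i => congrFun hx i

end Circle

section Torus

variable {r : ℕ}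

/-- The cocharacter `x ↦ (v₁x, …, v_r x)` of the torus with weights `v ∈ ℤ^r`. -/
def cocharacter (v : Fin r → ℤ) : AddCircle (1 : ℝ) →+ Torus r :=
  AddMonoidHom.pi fun i => zsmulAddGroupHom (v i)

theorem continuous_cocharacter (v : Fin r → ℤ) : Continuous (cocharacter v) :=
  continuous_pi fun i => continuous_zsmul (v i)

theorem sum_zsmul_cocharacter (α v : Fin r → ℤ) (x : AddCircle (1 : ℝ)) :
    ∑ i, α i • cocharacter v x i = (v ⬝ᵥ α) • x := by
  rw [dotProduct_comm, dotProduct, Finset.sum_smul]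
  exact Finset.sum_congr rfl fun i _ => (mul_smul (α i) (v i) x).symm

/-- The image of a cocharacter, as a subtorus; for `v ≠ 0` it is the one-dimensional
subtorus whose trivial characters are those orthogonal to `v`. -/
def cocharacterSubtorus (v : Fin r → ℤ) : Subtorus r where
  toAddSubgroup := (cocharacter v).range
  isClosed' := (isCompact_range (continuous_cocharacter v)).isClosed
  isConnected' := isConnected_range (continuous_cocharacter v)

theorem isTrivialOn_cocharacterSubtorus_iff {α v : Fin r → ℤ} :
    IsTrivialOn α (cocharacterSubtorus v).toAddSubgroup ↔ v ⬝ᵥ α = 0 := by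
  constructor
  · intro h
    refine eq_zero_of_forall_zsmul_addCircle_eq_zero (p := (1 : ℝ)) fun x => ?_
    rw [← sum_zsmul_cocharacter]
    exact h _ ⟨x, rfl⟩
  · rintro h _ ⟨x, rfl⟩
    rw [sum_zsmul_cocharacter, h, zero_smul]

theorem dim_cocharacterSubtorus {v : Fin r → ℤ} (hv : v ≠ 0) :
    (cocharacterSubtorus v).dim = 1 := by
  have trivialChars_eq_ker :
      AddSubgroup.toIntSubmodule (trivialChars (cocharacterSubtorus v).toAddSubgroup) =
        LinearMap.ker (dotProductEquiv ℤ (Fin r) v) :=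
    Submodule.ext fun _ => isTrivialOn_cocharacterSubtorus_iff
  have finrank_ker := finrank_ker_add_one_of_ne_zero
    ((map_ne_zero_iff _ (dotProductEquiv ℤ (Fin r)).injective).mpr hv)
  rw [Module.finrank_fin_fun] at finrank_ker
  rw [Subtorus.dim, trivialChars_eq_ker]
  omega

theorem exists_subtorus_dim_eq_one_forall_isTrivialOn_iff {f : (Fin r → ℤ) →ₗ[ℤ] ℤ} (hf : f ≠ 0) :
    ∃ K : Subtorus r, K.dim = 1 ∧ ∀ α, IsTrivialOn α K.toAddSubgroup ↔ f α = 0 := by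
  obtain ⟨v, rfl⟩ := (dotProductEquiv ℤ (Fin r)).surjective f
  exact ⟨cocharacterSubtorus v, dim_cocharacterSubtorus (by rintro rfl; exact hf (map_zero _)),
    fun _ => isTrivialOn_cocharacterSubtorus_iff⟩

theorem zsmul_eq_zero_of_forall_isTrivialOn_zsmul {F : AddSubgroup (Torus r)} {a : ℤ}
    (h : ∀ α, IsTrivialOn (a • α) F) {x : Torus r} (hx : x ∈ F) : a • x = 0 := by
  ext i
  simpa [Pi.single_apply, ite_smul] using h (Pi.single i 1) x hx

end Torus

theorem finiteness_of_sets_of_finite_subgroups_general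
    (r : ℕ) (S : Set (AddSubgroup (Torus r)))
    (h : ∀ K : Subtorus r, K.dim = 1 →
      ∃ (n : ℕ) (αs : Fin n → (Fin r → ℤ)),
        (∀ i, ¬ IsTrivialOn (αs i) K.toAddSubgroup) ∧
        (∀ F ∈ S, ∃ i, IsTrivialOn (αs i) F)) :
    S.Finite ∧ ∀ F ∈ S, (F : Set (Torus r)).Finite := by
  obtain ⟨a, ha, haS⟩ := exists_ne_zero_forall_smul_mem_of_forall_functional
    (fun F : S => AddSubgroup.toIntSubmodule (trivialChars F.1)) fun f hf => by
      obtain ⟨K, hK, hKf⟩ := exists_subtorus_dim_eq_one_forall_isTrivialOn_iff hf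
      obtain ⟨n, αs, hαK, hαS⟩ := h K hK
      refine ⟨Finset.univ.image αs, by simpa [hKf] using hαK, fun F => ?_⟩
      obtain ⟨i, hi⟩ := hαS F F.2
      exact ⟨αs i, Finset.mem_image_of_mem αs (Finset.mem_univ i), hi⟩
  have subset_torsion : ∀ F ∈ S, (F : Set (Torus r)) ⊆ {x | a • x = 0} := fun F hF _ hx =>
    zsmul_eq_zero_of_forall_isTrivialOn_zsmul (haS ⟨F, hF⟩) hx
  have finite_torsion := finite_setOf_zsmul_pi_addCircle_eq_zero (Fin r) (1 : ℝ) ha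
  exact ⟨(finite_torsion.finite_subsets.preimage SetLike.coe_injective.injOn).subset subset_torsion,
    fun F hF => finite_torsion.subset (subset_torsion F hF)⟩

/-- Let `𝒮` be a set of finite subgroups of `G`.  Suppose that for every
one-dimensional subtorus `K` there are finitely many characters, each nontrivial on `K`, such
that every `F ∈ 𝒮` has one of them trivial on it.  Then `𝒮` is finite. -/
theorem finiteness_of_sets_of_finite_subgroups
    (r : ℕ) (S : Set (FinSub r))
    (h : ∀ K : Subtorus r, K.dim = 1 →
      ∃ (n : ℕ) (αs : Fin n → (Fin r → ℤ)),
        (∀ i, ¬ IsTrivialOn (αs i) K.toAddSubgroup) ∧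
        (∀ F ∈ S, ∃ i, IsTrivialOn (αs i) F.1)) :
    S.Finite :=
  (finiteness_of_sets_of_finite_subgroups_general r (Subtype.val '' S) fun K hK =>
    (h K hK).imp fun _ ⟨αs, hαK, hαS⟩ => ⟨αs, hαK, Set.forall_mem_image.mpr hαS⟩).1.of_finite_image
      Subtype.val_injective.injOn
end

section
/- Let 0 ≤ s ≤ r and let 𝒮 be a set of subtori of G. Suppose that for every subtorus H of G of dimension greater than s there exist finitely many characters α₁,…,α_n ∈ ℤ^r, each nontrivial on H, such that every K ∈ 𝒮 has some α_i trivial on K. Then 𝒮 contains only finitely many subtori of dimension s. -/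
open scoped Classical

/-!
The proof is an argument of König type on the poset of subtori. If `dim H > s` and `α₁, …, α_n` are
the characters provided for `H`, then every `K ∈ 𝒮` contained in `H` lies in the identity component
of some `H ∩ ker α_i`, which is strictly smaller than `H`. Starting from the whole torus, this
produces a finitely branching tree of subtori, and the tree has finite depth because the dimension
is strictly monotone.

Strict monotonicity combines two facts. The characters trivial on a connected subgroup form a
saturated subgroup of `ℤ^r`, so a strictly larger group of characters has strictly larger rank. And
a closed subgroup `K` is the common kernel of the characters trivial on it: if all of them vanish at
`x`, the Haar measure of `K` and its translate to `x + K` have the same Fourier coefficients, so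
they coincide.
-/

theorem finite_setOf_le_and_le_apply {α β : Type*} [PartialOrder α] [LinearOrder β]
    [WellFoundedLT β] {f : α → β} (hf : StrictMono f) {S : Set α} {s : β}
    (h : ∀ a, s < f a → ∃ t : Set α, t.Finite ∧ (∀ b ∈ t, b < a) ∧
      ∀ u ∈ S, u ≤ a → ∃ b ∈ t, u ≤ b) (a : α) :
    {u ∈ S | u ≤ a ∧ s ≤ f u}.Finite := by
  have : WellFoundedLT α := hf.wellFoundedLT
  induction a using WellFoundedLT.induction with
  | ind a ih =>
    rcases lt_or_ge s (f a) with ha | ha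
    · obtain ⟨t, ht, hlt, hcover⟩ := h a ha
      refine (ht.biUnion fun b hb ↦ ih b (hlt b hb)).subset ?_
      rintro u ⟨huS, hua, hsu⟩
      obtain ⟨b, hb, hub⟩ := hcover u huS hua
      exact Set.mem_biUnion hb ⟨huS, hub, hsu⟩
    · refine (Set.finite_singleton a).subset ?_
      rintro u ⟨-, hua, hsu⟩
      exact hua.eq_of_not_lt fun hlt ↦ (hf hlt).not_ge (ha.trans hsu)

theorem finrank_lt_finrank_of_nsmulSaturated {M : Type*} [AddCommGroup M] {A B : AddSubgroup M}
    [Module.Finite ℤ B] (hA : A.NSMulSaturated) (hAB : A < B) :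
    Module.finrank ℤ A < Module.finrank ℤ B := by
  let A' : Submodule ℤ B := AddSubgroup.toIntSubmodule (A.addSubgroupOf B)
  have hrank : Module.finrank ℤ A' = Module.finrank ℤ A :=
    (AddSubgroup.addSubgroupOfEquivOfLe hAB.le).toIntLinearEquiv.finrank_eq
  rw [← hrank, ← A'.finrank_quotient_add_finrank, lt_add_iff_pos_left, Nat.pos_iff_ne_zero]
  intro hzero
  obtain ⟨x, hxB, hxA⟩ := SetLike.exists_of_lt hAB
  obtain ⟨n, hn, hnx⟩ := Module.finrank_eq_zero_iff.1 hzero (A'.mkQ ⟨x, hxB⟩)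
  rw [← map_zsmul, Submodule.mkQ_apply, Submodule.Quotient.mk_eq_zero] at hnx
  exact hxA ((AddSubgroup.saturated_iff_zsmul.1 hA n x hnx).resolve_left hn)

section IdentityComponent

variable {G : Type*} [TopologicalSpace G] [AddGroup G] [IsTopologicalAddGroup G]
  {L M : AddSubgroup G}

/-- The identity component `L₀` of a subgroup `L` of a topological group `G`, as a subgroup of `G`
rather than of `L`. -/
def identityComponent (L : AddSubgroup G) : AddSubgroup G :=
  (AddSubgroup.connectedComponentOfZero L).map L.subtype

theorem coe_identityComponent :
    (identityComponent L : Set G) = connectedComponentIn (L : Set G) 0 :=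
  (connectedComponentIn_eq_image L.zero_mem).symm

theorem isConnected_identityComponent : IsConnected (identityComponent L : Set G) := by
  rw [coe_identityComponent, isConnected_connectedComponentIn_iff]
  exact L.zero_mem

theorem isClosed_identityComponent (hL : IsClosed (L : Set G)) :
    IsClosed (identityComponent L : Set G) :=
  hL.isClosedEmbedding_subtypeVal.isClosedMap _ isClosed_connectedComponent

theorem le_identityComponent_iff (hM : IsPreconnected (M : Set G)) :
    M ≤ identityComponent L ↔ M ≤ L := by
  rw [← SetLike.coe_subset_coe, coe_identityComponent]
  exact ⟨fun h ↦ h.trans (connectedComponentIn_subset _ _),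
    hM.subset_connectedComponentIn M.zero_mem⟩

end IdentityComponent

section FourierUniqueness

open MeasureTheory UnitAddTorus

theorem integral_eq_zero_of_add_left_eq_smul {G 𝕜 E : Type*} [MeasurableSpace G] [AddGroup G]
    [MeasurableAdd G] {μ : Measure G} [μ.IsAddLeftInvariant] [NormedField 𝕜]
    [NormedAddCommGroup E] [NormedSpace ℝ E] [NormedSpace 𝕜 E] [SMulCommClass ℝ 𝕜 E]
    {f : G → E} {g : G} {c : 𝕜} (hc : c ≠ 1) (hf : ∀ x, f (g + x) = c • f x) :
    ∫ x, f x ∂μ = 0 := by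
  have hinv : c • ∫ x, f x ∂μ = ∫ x, f x ∂μ := by
    simpa only [hf, integral_smul] using integral_add_left_eq_self (μ := μ) f g
  have hzero : (c - 1) • ∫ x, f x ∂μ = 0 := by rw [sub_smul, one_smul, hinv, sub_self]
  exact (smul_eq_zero.1 hzero).resolve_left (sub_ne_zero.2 hc)

theorem ext_of_forall_mem_starSubalgebra_integral_eq {X 𝕜 : Type*} [RCLike 𝕜] [TopologicalSpace X]
    [CompactSpace X] [PolishSpace X] [MeasurableSpace X] [BorelSpace X] {P Q : Measure X}
    [IsFiniteMeasure P] [IsFiniteMeasure Q] {A : StarSubalgebra 𝕜 C(X, 𝕜)}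
    (hA : A.SeparatesPoints) (h : ∀ f ∈ A, ∫ x, f x ∂P = ∫ x, f x ∂Q) : P = Q := by
  refine ext_of_forall_mem_subalgebra_integral_eq_of_polish (𝕜 := 𝕜)
    (A := A.comap (BoundedContinuousFunction.toContinuousMapStarₐ 𝕜)) (fun x y hxy ↦ ?_)
    fun g hg ↦ h _ hg
  obtain ⟨_, ⟨f, hf, rfl⟩, hfxy⟩ := hA hxy
  exact ⟨f, ⟨f, ⟨BoundedContinuousFunction.mkOfCompact f, hf, rfl⟩, rfl⟩, hfxy⟩

variable {d : Type*} [Fintype d]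

theorem ext_of_integral_mFourier_eq {P Q : Measure (UnitAddTorus d)} [IsFiniteMeasure P]
    [IsFiniteMeasure Q]
    (h : ∀ n : d → ℤ, ∫ x, mFourier n x ∂P = ∫ x, mFourier n x ∂Q) : P = Q := by
  refine ext_of_forall_mem_starSubalgebra_integral_eq mFourierSubalgebra_separatesPoints
    fun f hf ↦ ?_
  rw [← StarSubalgebra.mem_toSubalgebra, ← Subalgebra.mem_toSubmodule,
    mFourierSubalgebra_coe] at hf
  have hint (g : C(UnitAddTorus d, ℂ)) (μ : Measure (UnitAddTorus d)) [IsFiniteMeasure μ] :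
      Integrable g μ :=
    g.continuous.integrable_of_hasCompactSupport (.of_compactSpace g)
  induction hf using Submodule.span_induction with
  | mem f hf =>
    obtain ⟨n, rfl⟩ := hf
    exact h n
  | zero => simp
  | add f g _ _ hf hg =>
    simp only [ContinuousMap.add_apply]
    rw [integral_add (hint f P) (hint g P), integral_add (hint f Q) (hint g Q), hf, hg]
  | smul c f _ hf =>
    simp only [ContinuousMap.smul_apply, integral_smul, hf]

end FourierUniqueness

section Characters

open MeasureTheory UnitAddTorus

variable {d : Type*} [Fintype d]

/-- The character `χ_α` of the torus, as a homomorphism to `ℝ/ℤ`. -/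
def torusChar (α : d → ℤ) : UnitAddTorus d →+ UnitAddCircle where
  toFun x := ∑ i, α i • x i
  map_zero' := by simp
  map_add' x y := by simp [Finset.sum_add_distrib]

theorem torusChar_apply (α : d → ℤ) (x : UnitAddTorus d) : torusChar α x = ∑ i, α i • x i := rfl

theorem torusChar_nsmul (n : ℕ) (α : d → ℤ) (x : UnitAddTorus d) :
    torusChar (n • α) x = n • torusChar α x := by
  simp [torusChar_apply, Finset.smul_sum, mul_smul]

theorem continuous_torusChar (α : d → ℤ) : Continuous (torusChar α) := by
  change Continuous fun x : UnitAddTorus d ↦ ∑ i, α i • x i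
  fun_prop

theorem isClosed_ker_torusChar (α : d → ℤ) :
    IsClosed ((torusChar α).ker : Set (UnitAddTorus d)) :=
  isClosed_singleton.preimage (continuous_torusChar α)

theorem mFourier_eq_toCircle_torusChar (α : d → ℤ) (x : UnitAddTorus d) :
    mFourier α x = (AddCircle.toCircle (torusChar α x) : ℂ) := by
  have hsum : AddCircle.toCircle (torusChar α x) = ∏ i, AddCircle.toCircle (α i • x i) :=
    map_sum AddCircle.toCircle_addChar.toAddMonoidHom _ _
  exact ((congrArg Circle.coeHom hsum).trans (map_prod Circle.coeHom _ _)).symm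

theorem mFourier_apply_add (α : d → ℤ) (x y : UnitAddTorus d) :
    mFourier α (x + y) = mFourier α x * mFourier α y := by
  simp [mFourier_eq_toCircle_torusChar, AddCircle.toCircle_add]

theorem mFourier_eq_one_iff {α : d → ℤ} {x : UnitAddTorus d} :
    mFourier α x = 1 ↔ torusChar α x = 0 := by
  rw [mFourier_eq_toCircle_torusChar, Circle.coe_eq_one, ← AddCircle.toCircle_zero (T := 1)]
  exact (AddCircle.injective_toCircle one_ne_zero).eq_iff

theorem integral_mFourier_eq_zero {K : AddSubgroup (UnitAddTorus d)} {μ : Measure K}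
    [μ.IsAddLeftInvariant] {α : d → ℤ} (hα : ¬ K ≤ (torusChar α).ker) :
    ∫ k : K, mFourier α k ∂μ = 0 := by
  obtain ⟨k, hkK, hk⟩ := SetLike.not_le_iff_exists.1 hα
  exact integral_eq_zero_of_add_left_eq_smul (g := ⟨k, hkK⟩) (mt mFourier_eq_one_iff.1 hk)
    fun x ↦ mFourier_apply_add α k x

theorem mem_of_forall_torusChar_eq_zero {K : AddSubgroup (UnitAddTorus d)}
    (hK : IsClosed (K : Set (UnitAddTorus d))) {x : UnitAddTorus d}
    (hx : ∀ α : d → ℤ, K ≤ (torusChar α).ker → torusChar α x = 0) : x ∈ K := by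
  by_contra hxK
  have : CompactSpace K := isCompact_iff_compactSpace.1 hK.isCompact
  let μ : Measure K := Measure.addHaar
  have hadd : Continuous fun k : K ↦ x + k := by fun_prop
  have htranslate : μ.map (fun k : K ↦ x + k) = μ.map ((↑) : K → UnitAddTorus d) := by
    refine ext_of_integral_mFourier_eq fun α ↦ ?_
    rw [integral_map hadd.aemeasurable (by fun_prop), integral_map (by fun_prop) (by fun_prop)]
    simp only [mFourier_apply_add, integral_const_mul]
    by_cases hα : K ≤ (torusChar α).ker
    · rw [mFourier_eq_one_iff.2 (hx α hα), one_mul]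
    · rw [integral_mFourier_eq_zero hα, mul_zero]
  have hempty : (fun k : K ↦ x + k) ⁻¹' K = ∅ :=
    Set.eq_empty_of_forall_notMem fun k hk ↦ hxK ((K.add_mem_cancel_right k.2).1 hk)
  have hmass : μ Set.univ = 0 := by
    have hmeasure := congrArg (· (K : Set (UnitAddTorus d))) htranslate
    rwa [Measure.map_apply hadd.measurable hK.measurableSet, hempty, measure_empty,
      Measure.map_apply measurable_subtype_coe hK.measurableSet, Subtype.coe_preimage_self,
      eq_comm] at hmeasure
  exact isOpen_univ.measure_ne_zero μ Set.univ_nonempty hmass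

theorem nsmulSaturated_trivialChars {r : ℕ} {K : AddSubgroup (Torus r)}
    (hK : IsPreconnected (K : Set (Torus r))) : (trivialChars K).NSMulSaturated := by
  intro n α hnα
  refine or_iff_not_imp_left.2 fun hn x hx ↦ ?_
  have htorsion : {u : UnitAddCircle | n • u = 0}.Finite :=
    AddCircle.finite_torsion 1 (Nat.pos_of_ne_zero hn)
  have himage : torusChar α '' K ⊆ {u | n • u = 0} := by
    rintro _ ⟨y, hy, rfl⟩
    exact (torusChar_nsmul n α y).symm.trans (hnα y hy)
  have hsubsingleton : (torusChar α '' K).Subsingleton :=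
    htorsion.countable.isTotallyDisconnected _ himage
      (hK.image _ (continuous_torusChar α).continuousOn)
  exact (hsubsingleton ⟨x, hx, rfl⟩ ⟨0, K.zero_mem, rfl⟩).trans (map_zero (torusChar α))

end Characters

namespace Subtorus

variable {r : ℕ} {H K : Subtorus r} {α : Fin r → ℤ}

theorem toAddSubgroup_injective :
    Function.Injective (toAddSubgroup : Subtorus r → AddSubgroup (Torus r)) := by
  rintro ⟨H, _, _⟩ ⟨K, _, _⟩ rfl
  rfl

instance : PartialOrder (Subtorus r) := PartialOrder.lift toAddSubgroup toAddSubgroup_injective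

instance : OrderTop (Subtorus r) where
  top := ⟨⊤, isClosed_univ, isConnected_univ⟩
  le_top K := le_top (a := K.toAddSubgroup)

theorem trivialChars_lt_trivialChars (h : H < K) :
    trivialChars K.toAddSubgroup < trivialChars H.toAddSubgroup := by
  refine lt_of_le_not_ge (fun α hα x hx ↦ hα x (h.le hx)) fun hle ↦ h.not_ge fun x hx ↦ ?_
  exact mem_of_forall_torusChar_eq_zero H.isClosed' fun α hα ↦ hle hα x hx

theorem dim_strictMono : StrictMono (dim : Subtorus r → ℕ) := by
  intro H K h
  have : Module.Finite ℤ (trivialChars H.toAddSubgroup) :=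
    inferInstanceAs (Module.Finite ℤ (AddSubgroup.toIntSubmodule (trivialChars H.toAddSubgroup)))
  have hlt := finrank_lt_finrank_of_nsmulSaturated
    (nsmulSaturated_trivialChars K.isConnected'.isPreconnected) (trivialChars_lt_trivialChars h)
  have hle := (trivialChars H.toAddSubgroup).toIntSubmodule.finrank_le
  rw [Module.finrank_fin_fun] at hle
  exact Nat.sub_lt_sub_left (hlt.trans_le hle) hlt

/-- The identity component of `H ∩ ker χ_α`: the largest subtorus of `H` on which `α` is
trivial. -/
def kerComponent (H : Subtorus r) (α : Fin r → ℤ) : Subtorus r where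
  toAddSubgroup := identityComponent (H.toAddSubgroup ⊓ (torusChar α).ker)
  isClosed' := isClosed_identityComponent (H.isClosed'.inter (isClosed_ker_torusChar α))
  isConnected' := isConnected_identityComponent

theorem le_kerComponent_iff :
    K ≤ H.kerComponent α ↔ K ≤ H ∧ IsTrivialOn α K.toAddSubgroup :=
  (le_identityComponent_iff K.isConnected'.isPreconnected).trans le_inf_iff

theorem kerComponent_lt (hα : ¬ IsTrivialOn α H.toAddSubgroup) : H.kerComponent α < H :=
  lt_of_le_not_ge (le_kerComponent_iff.1 le_rfl).1 fun h ↦ hα (le_kerComponent_iff.1 h).2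

end Subtorus

/-- Let `0 ≤ s ≤ r` and let `𝒮` be a set of subtori of `G`.  Suppose that for
every subtorus `H` of dimension greater than `s` there are finitely many characters, each
nontrivial on `H`, such that every `K ∈ 𝒮` has one of them trivial on it.  Then `𝒮` contains
only finitely many subtori of dimension `s`. -/
theorem finiteness_of_sets_of_subtori
    (r s : ℕ) (hs : s ≤ r) (S : Set (Subtorus r))
    (h : ∀ H : Subtorus r, s < H.dim →
      ∃ (n : ℕ) (αs : Fin n → (Fin r → ℤ)),
        (∀ i, ¬ IsTrivialOn (αs i) H.toAddSubgroup) ∧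
        (∀ K ∈ S, ∃ i, IsTrivialOn (αs i) K.toAddSubgroup)) :
    {K ∈ S | K.dim = s}.Finite := by
  have hcover (H : Subtorus r) (hH : s < H.dim) : ∃ t : Set (Subtorus r), t.Finite ∧
      (∀ L ∈ t, L < H) ∧ ∀ K ∈ S, K ≤ H → ∃ L ∈ t, K ≤ L := by
    obtain ⟨n, αs, hαs, hS⟩ := h H hH
    refine ⟨Set.range fun i ↦ H.kerComponent (αs i), Set.finite_range _, ?_, fun K hK hKH ↦ ?_⟩
    · rintro _ ⟨i, rfl⟩
      exact Subtorus.kerComponent_lt (hαs i)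
    · obtain ⟨i, hi⟩ := hS K hK
      exact ⟨_, ⟨i, rfl⟩, Subtorus.le_kerComponent_iff.2 ⟨hKH, hi⟩⟩
  exact (finite_setOf_le_and_le_apply Subtorus.dim_strictMono hcover ⊤).subset
    fun K hK ↦ ⟨hK.1, le_top, hK.2.ge⟩
end

section
/- The residue field ℚ = R/𝔪, regarded as an R-module, admits an injective resolution 0 → ℚ → J_0 → J_1 → ⋯ → J_r → 0 of R-modules in which J_i is isomorphic to a direct sum of binomial(r, i) copies of T (so in particular each J_i is an injective, 𝔪-power-torsion R-module). This resolution is the ℚ-dual of the Koszul resolution of ℚ by free R-modules. -/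
noncomputable section

/-- `R = ℚ[x₁,…,x_r]`. -/
abbrev PolyR (r : ℕ) : Type := MvPolynomial (Fin r) ℚ

/-- The maximal ideal `𝔪 = (x₁,…,x_r)` of polynomials with zero constant term. -/
def mIdeal (r : ℕ) : Ideal (PolyR r) := Ideal.span (Set.range MvPolynomial.X)

/-- The `ℚ`-linear dual `Hom_ℚ(R, ℚ)`. -/
abbrev DualR (r : ℕ) : Type := PolyR r →ₗ[ℚ] ℚ

/-- The dual is an `R`-module via `(a · φ)(b) = φ(a b)`. -/
instance dualRModule (r : ℕ) : Module (PolyR r) (DualR r) where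
  smul a φ := φ.comp (LinearMap.mulLeft ℚ a)
  one_smul φ := LinearMap.ext fun p => by
    show φ (1 * p) = φ p
    rw [one_mul]
  mul_smul a b φ := LinearMap.ext fun p => by
    show φ (a * b * p) = φ (b * (a * p))
    ring_nf
  smul_zero a := LinearMap.ext fun p => by
    show (0 : DualR r) (a * p) = 0
    rfl
  smul_add a φ ψ := LinearMap.ext fun p => by
    show (φ + ψ) (a * p) = φ (a * p) + ψ (a * p)
    rfl
  add_smul a b φ := LinearMap.ext fun p => by
    show φ ((a + b) * p) = φ (a * p) + φ (b * p)
    rw [add_mul, map_add]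
  zero_smul φ := LinearMap.ext fun p => by
    show φ (0 * p) = 0
    rw [zero_mul, map_zero]

lemma DualR.smul_apply {r : ℕ} (a : PolyR r) (φ : DualR r) (p : PolyR r) :
    (a • φ : DualR r) p = φ (a * p) := rfl

/-- The `R`-submodule `T ⊆ Hom_ℚ(R,ℚ)` of functionals vanishing on some power of `𝔪`
(it realizes `H_*(B𝕋^r; ℚ)`). -/
def Tsub (r : ℕ) : Submodule (PolyR r) (DualR r) where
  carrier := {φ | ∃ n : ℕ, ∀ p ∈ (mIdeal r) ^ n, φ p = 0}
  zero_mem' := ⟨0, fun p _ => rfl⟩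
  add_mem' := by
    rintro φ ψ ⟨n, hn⟩ ⟨m, hm⟩
    refine ⟨n + m, fun p hp => ?_⟩
    have hpn : p ∈ (mIdeal r) ^ n := Ideal.pow_le_pow_right (by omega) hp
    have hpm : p ∈ (mIdeal r) ^ m := Ideal.pow_le_pow_right (by omega) hp
    show φ p + ψ p = 0
    rw [hn p hpn, hm p hpm, add_zero]
  smul_mem' := by
    rintro a φ ⟨n, hn⟩
    refine ⟨n, fun p hp => ?_⟩
    rw [DualR.smul_apply]
    exact hn _ (Ideal.mul_mem_left _ a hp)

/-- `T`, the `𝔪`-power-torsion part of the dual of `R`, as an `R`-module. -/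
abbrev Tmod (r : ℕ) : Type := ↥(Tsub r)

noncomputable instance (r : ℕ) : AddCommGroup (Tmod r) := inferInstance

noncomputable instance (r : ℕ) : Module (PolyR r) (Tmod r) := inferInstance

/-- An `R`-module is `𝔪`-power-torsion if each element is annihilated by a power of `𝔪`. -/
def IsMTorsion (r : ℕ) (N : Type*) [AddCommGroup N] [Module (PolyR r) N] : Prop :=
  ∀ x : N, ∃ n : ℕ, ∀ a ∈ (mIdeal r) ^ n, a • x = 0

end

/-!
The Koszul cochain complex `K(a₁, …, a_k; M)` arises from `M` by iterated cones: adjoining `a_k`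
replaces a complex by the cone of multiplication by `a_k` on it, so its term of degree `n` is a sum
of `binomial(k, n)` copies of `M`. The long exact sequence of the cone shows that it is exact in
positive degrees as soon as each `aᵢ` acts surjectively on the elements of `M` killed by the
preceding ones, while its cohomology in degree zero consists of the elements killed by all `aᵢ`.

Let `R` be the polynomial ring over a field `F`. For `M = T` the complex `K(x₁, …, x_r; T)` is the
`𝔪`-adically continuous `F`-dual of the Koszul resolution of the residue field. The hypothesis holds
since division by `xᵢ` (discarding remainders) is a left inverse of multiplication by `xᵢ` commuting
with multiplication by the other `xⱼ`, so that its transpose is a right inverse of the action of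
`xᵢ` on `T`. The functionals killed by all variables are the multiples of the constant coefficient.
Finally `T` is injective by the criterion of Baer: a homomorphism `g` from an ideal `I` to `T`
amounts to the functional `x ↦ g x 1` on `I`, which by the Artin–Rees lemma vanishes on `I ∩ 𝔪ᵏ`
for some `k` and hence extends to a functional on `R` vanishing on `𝔪ᵏ`.
-/

universe w u v

noncomputable section

section Cone

variable {R : Type u} [CommRing R]

/-- The terms `J₀, J₁ × J₀, J₂ × J₁, …` of the cone of an endomorphism of a complex `J`, shifted so
that it starts in degree zero. -/
def coneObj (J : ℕ → ModuleCat.{v} R) : ℕ → ModuleCat.{v} R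
  | 0 => J 0
  | n + 1 => ModuleCat.of R (J (n + 1) × J n)

variable {J : ℕ → ModuleCat.{v} R} (a : R) (d : ∀ n, J n →ₗ[R] J (n + 1))

/-- The differential `(x, y) ↦ (d x, a x - d y)` of the cone of multiplication by `a`. -/
def coneD : ∀ n, coneObj J n →ₗ[R] coneObj J (n + 1)
  | 0 => (d 0).prod (a • LinearMap.id)
  | n + 1 => ((d (n + 1)).comp (LinearMap.fst R (J (n + 1)) (J n))).prod
      (a • LinearMap.fst R (J (n + 1)) (J n) - (d n).comp (LinearMap.snd R (J (n + 1)) (J n)))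

variable {d} (hd : ∀ n, Function.Exact (d n) (d (n + 1)))

include hd

lemma coneD_coneD_apply (n : ℕ) (x : coneObj J n) : coneD a d (n + 1) (coneD a d n x) = 0 := by
  cases n with
  | zero => exact Prod.ext ((hd 0).apply_apply_eq_zero x) (sub_eq_zero.2 (map_smul (d 0) a x).symm)
  | succ n =>
    have hsnd : a • d (n + 1) x.1 - d (n + 1) (a • x.1 - d n x.2) = 0 := by
      rw [map_sub, map_smul, (hd n).apply_apply_eq_zero, sub_zero, sub_self]
    exact Prod.ext ((hd (n + 1)).apply_apply_eq_zero x.1) hsnd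

/-- Exactness of `J` gives `x = d x'` for a cocycle `(x, y)`; what remains is the cocycle
`y - a x'`, to be hit by `d` in positive degrees and by `a` in degree zero. -/
lemma exists_eq_and_sub_smul_mem_ker {n : ℕ} {x : J (n + 1)} {y : J n}
    (h : coneD a d (n + 1) (show J (n + 1) × J n from (x, y)) = 0) :
    ∃ x' : J n, d n x' = x ∧ d n (y - a • x') = 0 := by
  obtain ⟨x', rfl⟩ := (hd n x).1 (congrArg Prod.fst h)
  have hsnd : a • d n x' - d n y = 0 := congrArg Prod.snd h
  exact ⟨x', rfl, by rw [map_sub, map_smul, ← neg_sub, hsnd, neg_zero]⟩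

lemma coneD_exact (ha : ∀ x, d 0 x = 0 → ∃ x', d 0 x' = 0 ∧ a • x' = x) (n : ℕ) :
    Function.Exact (coneD a d n) (coneD a d (n + 1)) := by
  refine fun z => ⟨fun hz => ?_, ?_⟩
  · obtain ⟨x, y⟩ : J (n + 1) × J n := z
    obtain ⟨x', rfl, hy⟩ := exists_eq_and_sub_smul_mem_ker a hd hz
    cases n with
    | zero =>
      obtain ⟨t, ht, hty⟩ := ha _ hy
      have hfst : d 0 (x' + t) = d 0 x' := by rw [map_add, ht, add_zero]
      have hsnd : a • (x' + t) = y := by rw [smul_add, hty, add_sub_cancel]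
      exact ⟨(x' + t : J 0), Prod.ext hfst hsnd⟩
    | succ n =>
      obtain ⟨t, ht⟩ := (hd n _).1 hy
      have hsnd : a • x' - d n (-t) = y := by rw [map_neg, ht, sub_neg_eq_add, add_sub_cancel]
      exact ⟨((x', -t) : J (n + 1) × J n), Prod.ext rfl hsnd⟩
  · rintro ⟨x, rfl⟩
    exact coneD_coneD_apply a hd n x

end Cone

section Koszul

variable {R : Type u} [CommRing R] {M : Type v} [AddCommGroup M] [Module R M] {k : ℕ}

/-- A finite sequence in `R` is weakly coregular on `M` if each member acts surjectively on the
elements of `M` annihilated by the preceding ones. The word "weakly" signals that the elements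
annihilated by the whole sequence may be zero. -/
def IsWeaklyCoregular (M : Type v) [AddCommGroup M] [Module R M] (a : Fin k → R) : Prop :=
  ∀ i, ∀ m : M, (∀ j < i, a j • m = 0) → ∃ m' : M, (∀ j < i, a j • m' = 0) ∧ a i • m' = m

lemma IsWeaklyCoregular.init {a : Fin (k + 1) → R} (h : IsWeaklyCoregular M a) :
    IsWeaklyCoregular M (Fin.init a) := fun i m hm => by
  simpa [Fin.forall_fin_succ', Fin.init, Fin.castSucc_lt_castSucc_iff,
    (Fin.castSucc_lt_last i).not_gt] using h i.castSucc m (by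
      simpa [Fin.forall_fin_succ', Fin.init, (Fin.castSucc_lt_last i).not_gt] using hm)

/-- The terms of the Koszul cochain complex of a sequence of length `k` in `R` with coefficients in
`M`, lifted to make room for an additional universe. -/
def koszulObj (R : Type u) [CommRing R] (M : Type v) [AddCommGroup M] [Module R M] :
    ℕ → ℕ → ModuleCat.{max v w} R
  | 0, 0 => ModuleCat.of R (ULift.{w} M)
  | 0, _ + 1 => ModuleCat.of R PUnit
  | k + 1, n => coneObj (koszulObj R M k) n

/-- The differential of the Koszul cochain complex of `a` with coefficients in `M`, an iterated cone
in which the last member of `a` is adjoined last. -/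
def koszulD (M : Type v) [AddCommGroup M] [Module R M] :
    ∀ {k : ℕ} (_ : Fin k → R) (n : ℕ), koszulObj.{w} R M k n →ₗ[R] koszulObj.{w} R M k (n + 1)
  | 0, _, _ => 0
  | _ + 1, a, n => coneD (a (Fin.last _)) (koszulD M (Fin.init a)) n

/-- The identification of `M` with the degree-zero term of a Koszul complex. -/
def koszulObjZeroEquiv (R : Type u) [CommRing R] (M : Type v) [AddCommGroup M] [Module R M] :
    ∀ k, M ≃ₗ[R] koszulObj.{w} R M k 0
  | 0 => ULift.moduleEquiv.symm
  | k + 1 => koszulObjZeroEquiv R M k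

/-- Pascal's rule for finite powers of a module. -/
def powChooseEquiv (R : Type u) [CommRing R] (M : Type v) [AddCommGroup M] [Module R M]
    (k n : ℕ) :
    ((Fin (k.choose (n + 1)) → M) × (Fin (k.choose n) → M)) ≃ₗ[R]
      (Fin ((k + 1).choose (n + 1)) → M) :=
  (LinearEquiv.sumArrowLequivProdArrow _ _ R M).symm ≪≫ₗ
    LinearEquiv.funCongrLeft R M ((finCongr (by rw [Nat.choose_succ_succ', add_comm])).trans
      finSumFinEquiv.symm)

/-- The terms of a Koszul complex as finite powers of the coefficient module. -/
def koszulObjEquiv (R : Type u) [CommRing R] (M : Type v) [AddCommGroup M] [Module R M] :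
    ∀ k n, koszulObj.{w} R M k n ≃ₗ[R] (Fin (k.choose n) → M)
  | k, 0 => (koszulObjZeroEquiv R M k).symm ≪≫ₗ (LinearEquiv.funUnique (Fin 1) R M).symm ≪≫ₗ
      LinearEquiv.funCongrLeft R M (finCongr k.choose_zero_right)
  | 0, _ + 1 => (0 : PUnit.{max v w + 1} ≃ₗ[R] (Fin 0 → M))
  | k + 1, n + 1 => (koszulObjEquiv R M k (n + 1)).prodCongr (koszulObjEquiv R M k n) ≪≫ₗ
      powChooseEquiv R M k n

lemma subsingleton_koszulObj {n : ℕ} (hn : k < n) : Subsingleton (koszulObj.{w} R M k n) := by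
  have : IsEmpty (Fin (k.choose n)) := by
    rw [Nat.choose_eq_zero_of_lt hn]
    infer_instance
  exact (koszulObjEquiv R M k n).subsingleton

lemma koszulD_koszulObjZeroEquiv_eq_zero_iff (a : Fin k → R) (m : M) :
    koszulD.{w} M a 0 (koszulObjZeroEquiv R M k m) = 0 ↔ ∀ i, a i • m = 0 := by
  induction k with
  | zero => exact iff_of_true rfl fun i => i.elim0
  | succ k ih =>
    rw [Fin.forall_fin_succ', ← (koszulObjZeroEquiv.{w} R M k).map_eq_zero_iff (x := a _ • m),
      map_smul]
    exact Prod.ext_iff.trans (and_congr (ih (Fin.init a)) Iff.rfl)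

lemma exact_koszulObjZeroEquiv_comp_koszulD {N : Type*} [AddCommGroup N] [Module R N]
    {a : Fin k → R} {f : N →ₗ[R] M} (hf : ∀ m, m ∈ LinearMap.range f ↔ ∀ i, a i • m = 0) :
    Function.Exact ((koszulObjZeroEquiv.{w} R M k).toLinearMap ∘ₗ f) (koszulD M a 0) := by
  intro x
  obtain ⟨m, rfl⟩ := (koszulObjZeroEquiv R M k).surjective x
  rw [koszulD_koszulObjZeroEquiv_eq_zero_iff, ← hf]
  simp

theorem koszulD_exact {a : Fin k → R} (h : IsWeaklyCoregular M a) (n : ℕ) :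
    Function.Exact (koszulD.{w} M a n) (koszulD.{w} M a (n + 1)) := by
  induction k generalizing n with
  | zero => exact fun x => iff_of_true rfl ⟨0, rfl⟩
  | succ k ih =>
    refine coneD_exact _ (ih h.init) (fun x hx => ?_) n
    obtain ⟨m, rfl⟩ := (koszulObjZeroEquiv.{w} R M k).surjective x
    rw [koszulD_koszulObjZeroEquiv_eq_zero_iff] at hx
    obtain ⟨m', hm', hm⟩ := h (Fin.last k) m (by
      simpa [Fin.forall_fin_succ', Fin.init, Fin.castSucc_lt_last] using hx)
    refine ⟨koszulObjZeroEquiv R M k m',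
      (koszulD_koszulObjZeroEquiv_eq_zero_iff _ _).2 fun i => hm' _ i.castSucc_lt_last, ?_⟩
    rw [← map_smul, hm]

end Koszul

section PowTorsion

variable {A : Type u} [CommRing A] {𝔞 : Ideal A} {N : Type v} [AddCommGroup N] [Module A N]

/-- An `A`-module is `𝔞`-power-torsion if each element is annihilated by a power of `𝔞`. -/
def IsPowTorsion (𝔞 : Ideal A) (N : Type v) [AddCommGroup N] [Module A N] : Prop :=
  ∀ x : N, ∃ n : ℕ, ∀ a ∈ 𝔞 ^ n, a • x = 0

lemma IsPowTorsion.pi {ι : Type w} [Finite ι] (h : IsPowTorsion 𝔞 N) :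
    IsPowTorsion 𝔞 (ι → N) := by
  intro x
  cases nonempty_fintype ι
  choose n hn using fun i => h (x i)
  refine ⟨Finset.univ.sup n, fun a ha => funext fun i => ?_⟩
  exact hn i a (Ideal.pow_le_pow_right (Finset.le_sup (Finset.mem_univ i)) ha)

variable {P : Type w} [AddCommGroup P] [Module A P]

lemma IsPowTorsion.of_injective (h : IsPowTorsion 𝔞 N) {f : P →ₗ[A] N}
    (hf : Function.Injective f) : IsPowTorsion 𝔞 P := by
  intro x
  obtain ⟨n, hn⟩ := h (f x)
  exact ⟨n, fun a ha => hf (by rw [map_smul, hn a ha, map_zero])⟩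

lemma IsPowTorsion.exists_pow_smul_top_le_ker [Module.Finite A P] (h : IsPowTorsion 𝔞 N)
    (g : P →ₗ[A] N) : ∃ n : ℕ, 𝔞 ^ n • (⊤ : Submodule A P) ≤ LinearMap.ker g := by
  obtain ⟨S, hS⟩ : (⊤ : Submodule A P).FG := Module.Finite.fg_top
  choose n hn using fun x => h (g x)
  refine ⟨S.sup n, Submodule.smul_le.2 fun b hb x _ => ?_⟩
  have hle : ⊤ ≤ LinearMap.ker (b • g) := hS ▸ Submodule.span_le.2 fun y hy =>
    hn y b (Ideal.pow_le_pow_right (Finset.le_sup hy) hb)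
  exact (map_smul g b x).trans (hle Submodule.mem_top)

/-- By the Artin–Rees lemma `U ∩ 𝔞ᵏ P` is contained in `𝔞ⁿ U` for large `k`. -/
lemma IsPowTorsion.exists_eq_zero_of_mem_pow_smul_top [IsNoetherianRing A] [Module.Finite A P]
    (h : IsPowTorsion 𝔞 N) (U : Submodule A P) (g : U →ₗ[A] N) :
    ∃ k : ℕ, ∀ x : U, (x : P) ∈ 𝔞 ^ k • (⊤ : Submodule A P) → g x = 0 := by
  obtain ⟨n, hn⟩ := h.exists_pow_smul_top_le_ker g
  obtain ⟨k, hk⟩ := Ideal.exists_pow_inf_eq_pow_smul 𝔞 U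
  refine ⟨n + k, fun x hx => hn ?_⟩
  have hmem : (x : P) ∈ 𝔞 ^ n • U := by
    have hinf : (x : P) ∈ 𝔞 ^ (n + k) • (⊤ : Submodule A P) ⊓ U := ⟨hx, x.2⟩
    rw [hk _ (Nat.le_add_left k n), Nat.add_sub_cancel] at hinf
    exact Submodule.smul_mono le_rfl inf_le_right hinf
  rwa [Submodule.mem_smul_top_iff]

end PowTorsion

section AdicDual

/-- The module structure `(a • φ) b = φ (a b)` on the dual of a commutative algebra. It is only a
local instance since over `A = K` it is not definitionally the usual action on the values. -/
abbrev algebraDualModule (K : Type u) (A : Type v) [CommRing K] [CommRing A] [Algebra K A] :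
    Module A (Module.Dual K A) where
  smul a φ := φ ∘ₗ LinearMap.mulLeft K a
  one_smul φ := LinearMap.ext fun p => congrArg φ (one_mul p)
  mul_smul a b φ := LinearMap.ext fun p =>
    congrArg φ ((mul_assoc a b p).trans (mul_left_comm a b p))
  smul_zero _ := rfl
  smul_add _ _ _ := rfl
  add_smul a b φ := LinearMap.ext fun p => (congrArg φ (add_mul a b p)).trans (map_add φ _ _)
  zero_smul φ := LinearMap.ext fun p => (congrArg φ (zero_mul p)).trans (map_zero φ)

attribute [local instance] algebraDualModule

variable {K : Type u} {A : Type v} [CommRing K] [CommRing A] [Algebra K A]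

lemma algebraDual_smul_apply (a : A) (φ : Module.Dual K A) (b : A) : (a • φ) b = φ (a * b) := rfl

lemma isScalarTower_algebraDual : IsScalarTower K A (Module.Dual K A) where
  smul_assoc c a φ := LinearMap.ext fun b => by
    rw [algebraDual_smul_apply, smul_mul_assoc, map_smul]
    rfl

attribute [local instance] isScalarTower_algebraDual

variable (K) in
/-- The functionals on `A` vanishing on some power of the ideal `𝔞`, that is, those that are
continuous for the `𝔞`-adic topology on `A` and the discrete topology on `K`. -/
def adicDual (𝔞 : Ideal A) : Submodule A (Module.Dual K A) where
  carrier := {φ | ∃ n : ℕ, ∀ p ∈ 𝔞 ^ n, φ p = 0}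
  zero_mem' := ⟨0, fun _ _ => rfl⟩
  add_mem' := by
    rintro φ ψ ⟨n, hn⟩ ⟨m, hm⟩
    refine ⟨n + m, fun p hp => ?_⟩
    rw [LinearMap.add_apply, hn p (Ideal.pow_le_pow_right (Nat.le_add_right n m) hp),
      hm p (Ideal.pow_le_pow_right (Nat.le_add_left m n) hp), add_zero]
  smul_mem' := fun a _ ⟨n, hn⟩ => ⟨n, fun _ hp => hn _ (Ideal.mul_mem_left _ a hp)⟩

lemma isPowTorsion_adicDual (𝔞 : Ideal A) : IsPowTorsion 𝔞 (adicDual K 𝔞) := fun ⟨_, n, hn⟩ =>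
  ⟨n, fun _ ha => Subtype.ext (LinearMap.ext fun p => hn _ (Ideal.mul_mem_right p _ ha))⟩

variable (K) in
/-- Evaluation at `1`. An `A`-linear map into `adicDual K 𝔞` is determined by its composition with
this functional, see `adicDualEvalOne_map_smul`. -/
def adicDualEvalOne (𝔞 : Ideal A) : adicDual K 𝔞 →ₗ[K] K :=
  LinearMap.applyₗ 1 ∘ₗ (adicDual K 𝔞).subtype.restrictScalars K

lemma adicDualEvalOne_map_smul {𝔞 : Ideal A} {M : Type w} [AddCommGroup M] [Module A M]
    (g : M →ₗ[A] adicDual K 𝔞) (p : A) (m : M) :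
    adicDualEvalOne K 𝔞 (g (p • m)) = (g m : Module.Dual K A) p := by
  rw [map_smul]
  exact congrArg (g m : Module.Dual K A) (mul_one p)

/-- A functional on `U` vanishing on `U ⊓ W` factors through the image of `U` in `V ⧸ W`. -/
lemma exists_extend_eq_zero {F : Type u} {V : Type v} [Field F] [AddCommGroup V] [Module F V]
    (U W : Submodule F V) (φ : Module.Dual F U) (hφ : ∀ u : U, (u : V) ∈ W → φ u = 0) :
    ∃ ψ : Module.Dual F V, (∀ u : U, ψ u = φ u) ∧ ∀ w ∈ W, ψ w = 0 := by
  have hmem : φ ∈ LinearMap.range (W.mkQ ∘ₗ U.subtype).dualMap := by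
    rw [LinearMap.range_dualMap_eq_dualAnnihilator_ker, Submodule.mem_dualAnnihilator]
    exact fun u hu => hφ u (by simpa using hu)
  obtain ⟨χ, rfl⟩ := hmem
  refine ⟨χ ∘ₗ W.mkQ, fun u => rfl, fun w hw => ?_⟩
  rw [LinearMap.comp_apply, Submodule.mkQ_apply, (Submodule.Quotient.mk_eq_zero W).2 hw, map_zero]

theorem baer_adicDual {F : Type u} [Field F] [Algebra F A] [IsNoetherianRing A] (𝔞 : Ideal A) :
    Module.Baer A (adicDual F 𝔞) := by
  intro I g
  obtain ⟨k, hk⟩ := (isPowTorsion_adicDual 𝔞).exists_eq_zero_of_mem_pow_smul_top I g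
  obtain ⟨ψ, hψ, hψ_zero⟩ := exists_extend_eq_zero (I.restrictScalars F)
    ((𝔞 ^ k).restrictScalars F) (adicDualEvalOne F 𝔞 ∘ₗ g.restrictScalars F) fun x hx => by
      have hgx : g x = 0 := hk x (by simpa using hx)
      exact congrArg (adicDualEvalOne F 𝔞) hgx
  refine ⟨LinearMap.toSpanSingleton A _ ⟨ψ, k, hψ_zero⟩, fun x hx => ?_⟩
  refine Subtype.ext (LinearMap.ext fun p => ?_)
  calc ψ (x * p) = ψ (p * x) := by rw [mul_comm]
    _ = adicDualEvalOne F 𝔞 (g (p • ⟨x, hx⟩)) := hψ (p • ⟨x, hx⟩ : I)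
    _ = (g ⟨x, hx⟩ : Module.Dual F A) p := adicDualEvalOne_map_smul g p _

lemma injective_of_linearEquiv_pi_adicDual {F : Type u} [Field F] [Algebra F A]
    [IsNoetherianRing A] {𝔞 : Ideal A} {N : Type*} [AddCommGroup N] [Module A N] {ι : Type*}
    (e : N ≃ₗ[A] (ι → adicDual F 𝔞)) : Module.Injective A N := by
  have : Module.Baer A (ι → adicDual F 𝔞) := fun I g => by
    choose h hh using fun i => baer_adicDual 𝔞 I (LinearMap.proj i ∘ₗ g)
    exact ⟨LinearMap.pi h, fun x hx => funext fun i => hh i x hx⟩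
  exact (this.of_equiv e.symm).injective

lemma isPowTorsion_of_linearEquiv_pi_adicDual {𝔞 : Ideal A} {N : Type*} [AddCommGroup N]
    [Module A N] {ι : Type*} [Finite ι] (e : N ≃ₗ[A] (ι → adicDual K 𝔞)) : IsPowTorsion 𝔞 N :=
  (isPowTorsion_adicDual 𝔞).pi.of_injective (f := e.toLinearMap) e.injective

end AdicDual

section Polynomial

open MvPolynomial

attribute [local instance] algebraDualModule

variable {K : Type u} [CommRing K] {σ : Type v}

lemma mem_idealOfVars_iff {p : MvPolynomial σ K} :
    p ∈ idealOfVars σ K ↔ constantCoeff p = 0 := by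
  rw [← pow_one (idealOfVars σ K), mem_pow_idealOfVars_iff']
  simp [Finsupp.degree_eq_zero_iff, constantCoeff_eq]

/-- Division by the variable `xᵢ`, discarding the remainder. -/
def divX (i : σ) : MvPolynomial σ K →ₗ[K] MvPolynomial σ K where
  toFun p := p.divMonomial (Finsupp.single i 1)
  map_add' p q := add_divMonomial p q _
  map_smul' c p := by ext; simp

lemma coeff_divX (i : σ) (p : MvPolynomial σ K) (s : σ →₀ ℕ) :
    coeff s (divX i p) = coeff (Finsupp.single i 1 + s) p :=
  coeff_divMonomial _ p s

lemma divX_X_mul (i : σ) (p : MvPolynomial σ K) : divX i (X i * p) = p := X_mul_divMonomial i p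

lemma divX_X_mul_of_ne {i j : σ} (hij : i ≠ j) (p : MvPolynomial σ K) :
    divX i (X j * p) = X j * divX i p := by
  classical
  ext s
  have hsupp : j ∈ (Finsupp.single i 1 + s).support ↔ j ∈ s.support := by simp [hij]
  simp only [coeff_divX, coeff_X_mul', hsupp]
  refine ite_congr rfl (fun hj => ?_) fun _ => rfl
  rw [add_tsub_assoc_of_le (Finsupp.single_le_iff.2 (Nat.one_le_iff_ne_zero.2 (by simpa using hj)))]

lemma divX_mem_pow_idealOfVars (i : σ) {n : ℕ} {p : MvPolynomial σ K}
    (hp : p ∈ idealOfVars σ K ^ (n + 1)) : divX i p ∈ idealOfVars σ K ^ n := by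
  rw [mem_pow_idealOfVars_iff'] at hp ⊢
  intro s hs
  rw [coeff_divX]
  apply hp
  rw [map_add, Finsupp.degree_single]
  omega

/-- The transpose of division by `xᵢ` solves `xᵢ ψ = φ`. -/
lemma exists_X_smul_eq (i : σ) {s : Set σ} (hi : i ∉ s) (φ : adicDual K (idealOfVars σ K))
    (hφ : ∀ j ∈ s, (X j : MvPolynomial σ K) • φ = 0) :
    ∃ ψ : adicDual K (idealOfVars σ K),
      (∀ j ∈ s, (X j : MvPolynomial σ K) • ψ = 0) ∧ (X i : MvPolynomial σ K) • ψ = φ := by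
  obtain ⟨φ, n, hn⟩ := φ
  refine ⟨⟨φ ∘ₗ divX i, n + 1, fun p hp => hn _ (divX_mem_pow_idealOfVars i hp)⟩, fun j hj => ?_,
    Subtype.ext (LinearMap.ext fun p => congrArg φ (divX_X_mul i p))⟩
  have hji : i ≠ j := fun h => hi (h ▸ hj)
  have hφj : (X j : MvPolynomial σ K) • φ = 0 := congrArg Subtype.val (hφ j hj)
  refine Subtype.ext (LinearMap.ext fun p => ?_)
  calc φ (divX i (X j * p)) = φ (X j * divX i p) := by rw [divX_X_mul_of_ne hji]
    _ = 0 := LinearMap.congr_fun hφj (divX i p)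

lemma isWeaklyCoregular_X (r : ℕ) :
    IsWeaklyCoregular (adicDual K (idealOfVars (Fin r) K)) (X : Fin r → MvPolynomial (Fin r) K) :=
  fun i => exists_X_smul_eq i (s := Set.Iio i) (lt_irrefl i)

variable (K σ) in
/-- The constant coefficient, as a functional vanishing on the ideal of the variables. -/
def constantCoeffDual : adicDual K (idealOfVars σ K) :=
  ⟨lcoeff K 0, 1, fun p hp => mem_idealOfVars_iff.1 (by rwa [pow_one] at hp)⟩

lemma ker_toSpanSingleton_constantCoeffDual :
    LinearMap.ker (LinearMap.toSpanSingleton (MvPolynomial σ K) _ (constantCoeffDual K σ)) =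
      idealOfVars σ K := by
  ext p
  rw [mem_idealOfVars_iff]
  refine ⟨fun hp => ?_, fun hp => Subtype.ext (LinearMap.ext fun q => ?_)⟩
  · have hone : constantCoeff (p * 1) = 0 := congrArg (adicDualEvalOne K _) hp
    rwa [mul_one] at hone
  · change constantCoeff (p * q) = 0
    rw [map_mul, hp, zero_mul]

variable (K σ) in
/-- The embedding of the residue field at the origin into the adic dual of the polynomial ring that
sends `1` to the constant coefficient. -/
def residueToAdicDual :
    (MvPolynomial σ K ⧸ idealOfVars σ K) →ₗ[MvPolynomial σ K] adicDual K (idealOfVars σ K) :=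
  (idealOfVars σ K).liftQ (LinearMap.toSpanSingleton _ _ (constantCoeffDual K σ))
    ker_toSpanSingleton_constantCoeffDual.ge

lemma residueToAdicDual_injective : Function.Injective (residueToAdicDual K σ) :=
  LinearMap.ker_eq_bot.1 <| Submodule.ker_liftQ_eq_bot' (idealOfVars σ K)
    (LinearMap.toSpanSingleton _ _ (constantCoeffDual K σ))
    ker_toSpanSingleton_constantCoeffDual.symm

lemma eq_constantCoeff_mul_of_X_smul_eq_zero {φ : Module.Dual K (MvPolynomial σ K)}
    (hφ : ∀ i, (X i : MvPolynomial σ K) • φ = 0) (p : MvPolynomial σ K) :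
    φ p = constantCoeff p * φ 1 := by
  induction p using MvPolynomial.induction_on with
  | C c => rw [constantCoeff_C, ← smul_eq_mul, ← map_smul, smul_eq_C_mul, mul_one]
  | add p q hp hq => rw [map_add, hp, hq, map_add, add_mul]
  | mul_X p i _ =>
    have hi : φ (X i * p) = 0 := LinearMap.congr_fun (hφ i) p
    rw [mul_comm, hi, map_mul, constantCoeff_X, zero_mul, zero_mul]

lemma mem_range_residueToAdicDual_iff {φ : adicDual K (idealOfVars σ K)} :
    φ ∈ LinearMap.range (residueToAdicDual K σ) ↔ ∀ i, (X i : MvPolynomial σ K) • φ = 0 := by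
  constructor
  · rintro ⟨y, rfl⟩ i
    obtain ⟨p, rfl⟩ := Submodule.Quotient.mk_surjective _ y
    rw [← map_smul, ← Submodule.Quotient.mk_smul, (Submodule.Quotient.mk_eq_zero _).2, map_zero]
    exact Ideal.mul_mem_right p _ (Ideal.subset_span ⟨i, rfl⟩)
  · intro hφ
    refine ⟨Submodule.Quotient.mk (C (adicDualEvalOne K _ φ)),
      Subtype.ext (LinearMap.ext fun p => ?_)⟩
    change constantCoeff (C (adicDualEvalOne K _ φ) * p) = (φ : Module.Dual K _) p
    rw [map_mul, constantCoeff_C, mul_comm,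
      eq_constantCoeff_mul_of_X_smul_eq_zero (fun i => congrArg Subtype.val (hφ i)) p]
    rfl

theorem residue_field_injective_resolution_general (F : Type u) [Field F] (r : ℕ) :
    ∃ (J : ℕ → ModuleCat.{max u w} (MvPolynomial (Fin r) F))
      (f : (MvPolynomial (Fin r) F ⧸ idealOfVars (Fin r) F) →ₗ[MvPolynomial (Fin r) F] J 0)
      (d : ∀ n : ℕ, J n →ₗ[MvPolynomial (Fin r) F] J (n + 1)),
      (∀ i ≤ r, Nonempty ((J i) ≃ₗ[MvPolynomial (Fin r) F]
        (Fin (r.choose i) → adicDual F (idealOfVars (Fin r) F)))) ∧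
      (∀ i ≤ r, Module.Injective (MvPolynomial (Fin r) F) (J i) ∧
        IsPowTorsion (idealOfVars (Fin r) F) (J i)) ∧
      (∀ n, r < n → Subsingleton (J n)) ∧
      Function.Injective f ∧
      LinearMap.range f = LinearMap.ker (d 0) ∧
      (∀ n : ℕ, LinearMap.range (d n) = LinearMap.ker (d (n + 1))) := by
  let T := adicDual F (idealOfVars (Fin r) F)
  let e (i : ℕ) := koszulObjEquiv.{w} (MvPolynomial (Fin r) F) T r i
  have hzero := exact_koszulObjZeroEquiv_comp_koszulD.{w} (a := X)
    fun φ => mem_range_residueToAdicDual_iff (K := F) (σ := Fin r) (φ := φ)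
  have hpos := koszulD_exact.{w} (isWeaklyCoregular_X (K := F) r)
  exact ⟨koszulObj _ T r, (koszulObjZeroEquiv _ T r).toLinearMap ∘ₗ residueToAdicDual F (Fin r),
    koszulD T X, fun i _ => ⟨e i⟩,
    fun i _ => ⟨injective_of_linearEquiv_pi_adicDual (e i),
      isPowTorsion_of_linearEquiv_pi_adicDual (e i)⟩,
    fun _ => subsingleton_koszulObj,
    (koszulObjZeroEquiv _ T r).injective.comp residueToAdicDual_injective,
    hzero.linearMap_ker_eq.symm, fun n => (hpos n).linearMap_ker_eq.symm⟩

end Polynomial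

end

/-- The residue field `ℚ = R/𝔪`, as an `R`-module, has an injective
resolution `0 → ℚ → J_0 → J_1 → ⋯ → J_r → 0` in which `J_i` is isomorphic to a direct sum of
`binomial(r, i)` copies of `T` (so in particular each `J_i` is an injective,
`𝔪`-power-torsion `R`-module).  (The complex is encoded as an `ℕ`-indexed complex vanishing
in degrees `> r`.) -/
theorem residue_field_injective_resolution
    (r : ℕ) :
    ∃ (J : ℕ → ModuleCat (PolyR r))
      (f : (PolyR r ⧸ mIdeal r) →ₗ[PolyR r] J 0)
      (d : ∀ n : ℕ, J n →ₗ[PolyR r] J (n + 1)),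
      (∀ i ≤ r, Nonempty ((J i) ≃ₗ[PolyR r] (Fin (r.choose i) → Tmod r))) ∧
      (∀ i ≤ r, Module.Injective (PolyR r) (J i) ∧ IsMTorsion r (J i)) ∧
      (∀ n, r < n → Subsingleton (J n)) ∧
      Function.Injective f ∧
      LinearMap.range f = LinearMap.ker (d 0) ∧
      (∀ n : ℕ, LinearMap.range (d n) = LinearMap.ker (d (n + 1))) :=
  residue_field_injective_resolution_general ℚ r
end
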